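/- SO(4, ℝ) has no closed connected proper subgroup of dimension 5, and every closed connected 4-dimensional subgroup of SO(4, ℝ) is conjugate in O(4, ℝ) to the unitary group U(2) embedded in SO(4, ℝ) via the standard identification ℂ² ≅ ℝ⁴. -/

import Mathlib

open scoped ENNReal

/-- `SO(4, ℝ)` as a subset of the orthogonal group `O(4, ℝ)`. -/
def so4Set : Set ↥(Matrix.orthogonalGroup (Fin 4) ℝ) :=
  {A : ↥(Matrix.orthogonalGroup (Fin 4) ℝ) | (A : Matrix (Fin 4) (Fin 4) ℝ).det = 1}

/-- The standard complex structure `J` on `ℝ⁴ ≅ ℂ²`. -/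
def J4 : Matrix (Fin 4) (Fin 4) ℝ :=
  Matrix.of fun i j : Fin 4 =>
    if (j : ℕ) = (i : ℕ) + 2 then 1 else if (i : ℕ) = (j : ℕ) + 2 then -1 else 0

/-- The unitary group `U(2)` embedded in `SO(4, ℝ)` via the identification `ℂ² ≅ ℝ⁴`:
orthogonal matrices commuting with the standard complex structure `J`. -/
def u2Set : Set ↥(Matrix.orthogonalGroup (Fin 4) ℝ) :=
  {A : ↥(Matrix.orthogonalGroup (Fin 4) ℝ) |
    (A : Matrix (Fin 4) (Fin 4) ℝ) * J4 = J4 * (A : Matrix (Fin 4) (Fin 4) ℝ)}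

/-- The dimension of a subgroup of `O(4, ℝ)`, measured as the Hausdorff dimension of its
underlying set of matrices. -/
noncomputable def orth4SubgroupDim (H : Subgroup ↥(Matrix.orthogonalGroup (Fin 4) ℝ)) :
    ℝ≥0∞ :=
  dimH ((fun A : ↥(Matrix.orthogonalGroup (Fin 4) ℝ) =>
    fun i j : Fin 4 => (A : Matrix (Fin 4) (Fin 4) ℝ) i j) ''
      (H : Set ↥(Matrix.orthogonalGroup (Fin 4) ℝ)))


section LieTheory

set_option linter.style.haveILetI false
set_option linter.unusedSectionVars false

open Filter Topology NormedSpace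

variable {𝔸 : Type*} [NormedRing 𝔸] [NormedAlgebra ℝ 𝔸] [CompleteSpace 𝔸]

theorem lt_exp_cont : Continuous (exp : 𝔸 → 𝔸) := by
  letI := NormedAlgebra.restrictScalars ℚ ℝ 𝔸
  exact exp_continuous

theorem lt_exp_add_smul (s t : ℝ) (X : 𝔸) : exp ((s + t) • X) = exp (s • X) * exp (t • X) := by
  letI := NormedAlgebra.restrictScalars ℚ ℝ 𝔸
  rw [add_smul]
  exact exp_add_of_commute (((Commute.refl X).smul_left s).smul_right t)

theorem lt_exp_mul_neg (X : 𝔸) : exp X * exp (-X) = 1 := by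
  letI := NormedAlgebra.restrictScalars ℚ ℝ 𝔸
  rw [← exp_add_of_commute ((Commute.refl X).neg_right), add_neg_cancel, exp_zero]

theorem lt_exp_neg_mul (X : 𝔸) : exp (-X) * exp X = 1 := by
  simpa using lt_exp_mul_neg (-X)

theorem lt_exp_pow (n : ℕ) (X : 𝔸) : exp X ^ n = exp ((n : ℝ) • X) := by
  letI := NormedAlgebra.restrictScalars ℚ ℝ 𝔸
  rw [← exp_nsmul, Nat.cast_smul_eq_nsmul]

theorem lt_exp_conj (u v X : 𝔸) (h1 : u * v = 1) (h2 : v * u = 1) :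
    exp (u * X * v) = u * exp X * v := by
  letI := NormedAlgebra.restrictScalars ℚ ℝ 𝔸
  exact exp_units_conj (⟨u, v, h1, h2⟩ : 𝔸ˣ) X

theorem lt_pow_sub_pow [NormOneClass 𝔸] (a b : 𝔸) (m : ℝ) (hm : 1 ≤ m) (ha : ‖a‖ ≤ m)
    (hb : ‖b‖ ≤ m) (k : ℕ) : ‖a ^ k - b ^ k‖ ≤ k * m ^ k * ‖a - b‖ := by
  induction k with
  | zero => simp
  | succ k ih =>
    have e : a ^ (k + 1) - b ^ (k + 1) = a * (a ^ k - b ^ k) + (a - b) * b ^ k := by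
      rw [pow_succ', pow_succ']; noncomm_ring
    have hbk : ‖b ^ k‖ ≤ m ^ (k + 1) :=
      (norm_pow_le b k).trans ((pow_le_pow_left₀ (norm_nonneg _) hb k).trans
        (pow_le_pow_right₀ hm (Nat.le_succ k)))
    rw [e]
    calc _ ≤ ‖a‖ * ‖a ^ k - b ^ k‖ + ‖a - b‖ * ‖b ^ k‖ :=
          (norm_add_le _ _).trans (add_le_add (norm_mul_le _ _) (norm_mul_le _ _))
      _ ≤ m * (k * m ^ k * ‖a - b‖) + ‖a - b‖ * m ^ (k + 1) := by gcongr
      _ = _ := by push_cast; ring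

theorem lt_slope (X : 𝔸) : Tendsto (fun t : ℝ => t⁻¹ • (exp (t • X) - 1)) (𝓝[≠] 0) (𝓝 X) := by
  have h := hasDerivAt_exp_smul_const (𝕂 := ℝ) X (0 : ℝ)
  rw [hasDerivAt_iff_tendsto_slope] at h
  simpa [slope_fun_def] using h

/-- Limits of rescaled sequences in a closed submonoid generate one-parameter semigroups. -/
theorem lt_key [NormOneClass 𝔸] (S : Submonoid 𝔸) (hS : IsClosed (S : Set 𝔸)) (A : ℕ → 𝔸)
    (hA : ∀ n, A n ∈ S) (ε : ℕ → ℝ) (hε : ∀ n, 0 < ε n) (hε0 : Tendsto ε atTop (𝓝 0)) (X : 𝔸)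
    (hX : Tendsto (fun n => (ε n)⁻¹ • (A n - 1)) atTop (𝓝 X)) (t : ℝ) (ht : 0 ≤ t) :
    exp (t • X) ∈ S := by
  have hε' : Tendsto ε atTop (𝓝[≠] 0) :=
    tendsto_nhdsWithin_iff.2 ⟨hε0, Eventually.of_forall fun n => (hε n).ne'⟩
  have hY := (lt_slope X).comp hε'
  set k : ℕ → ℕ := fun n => ⌊t / ε n⌋₊ with hk
  have hkt : ∀ n, k n * ε n ≤ t := fun n => by
    have := Nat.floor_le (div_nonneg ht (hε n).le)
    calc _ ≤ t / ε n * ε n := mul_le_mul_of_nonneg_right this (hε n).le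
      _ = t := div_mul_cancel₀ _ (hε n).ne'
  have hkt2 : ∀ n, t - ε n ≤ k n * ε n := fun n => by
    have := (Nat.lt_floor_add_one (t / ε n)).le
    have h2 : t / ε n * ε n ≤ ((k n : ℝ) + 1) * ε n := mul_le_mul_of_nonneg_right this (hε n).le
    rw [div_mul_cancel₀ _ (hε n).ne'] at h2
    linarith
  have hklim : Tendsto (fun n => k n * ε n) atTop (𝓝 t) := by
    refine tendsto_of_tendsto_of_tendsto_of_le_of_le ?_ tendsto_const_nhds hkt2 hkt
    simpa using tendsto_const_nhds.sub hε0
  have hb1 : Tendsto (fun n => exp (ε n • X) ^ k n) atTop (𝓝 (exp (t • X))) := by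
    have : (fun n => exp (ε n • X) ^ k n) = fun n => exp ((k n * ε n) • X) := by
      ext n; rw [lt_exp_pow, smul_smul]
    rw [this]
    exact (lt_exp_cont.tendsto _).comp (hklim.smul_const X)
  set C := ‖X‖ + 1
  have hC1 : ∀ᶠ n in atTop, ‖(ε n)⁻¹ • (A n - 1)‖ < C :=
    hX.norm.eventually_lt_const (by simp [C])
  have hC2 : ∀ᶠ n in atTop, ‖(ε n)⁻¹ • (exp (ε n • X) - 1)‖ < C :=
    hY.norm.eventually_lt_const (by simp [C])
  have aux : ∀ (n : ℕ) (a : 𝔸), ‖(ε n)⁻¹ • (a - 1)‖ < C → ‖a‖ ≤ 1 + ε n * C := by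
    intro n a h
    have : a = 1 + ε n • ((ε n)⁻¹ • (a - 1)) := by
      rw [smul_smul, mul_inv_cancel₀ (hε n).ne', one_smul]; abel
    rw [this]
    refine (norm_add_le _ _).trans ?_
    rw [norm_one, norm_smul, Real.norm_of_nonneg (hε n).le]
    have := (hε n).le
    gcongr
  have hCpos : 0 ≤ C := by positivity
  have hdiff : Tendsto (fun n => A n ^ k n - exp (ε n • X) ^ k n) atTop (𝓝 0) := by
    have h0 : Tendsto (fun n => t * Real.exp (t * C) *
        ‖(ε n)⁻¹ • (A n - 1) - (ε n)⁻¹ • (exp (ε n • X) - 1)‖) atTop (𝓝 0) := by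
      have := ((hX.sub hY).norm).const_mul (t * Real.exp (t * C))
      simpa using this
    refine squeeze_zero_norm' ?_ h0
    filter_upwards [hC1, hC2] with n h1 h2
    have hεn := (hε n)
    refine (lt_pow_sub_pow _ _ (1 + ε n * C) (by nlinarith) (aux n _ h1) (aux n _ h2) (k n)).trans ?_
    have e : (ε n)⁻¹ • (A n - 1) - (ε n)⁻¹ • (exp (ε n • X) - 1)
        = (ε n)⁻¹ • (A n - exp (ε n • X)) := by
      rw [← smul_sub]; congr 1; abel
    rw [e, norm_smul, Real.norm_of_nonneg (inv_nonneg.2 hεn.le)]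
    have hp : (1 + ε n * C) ^ k n ≤ Real.exp (t * C) := by
      calc _ ≤ (Real.exp (ε n * C)) ^ k n := by
            gcongr
            linarith [Real.add_one_le_exp (ε n * C)]
        _ = Real.exp (k n * ε n * C) := by rw [← Real.exp_nat_mul]; ring_nf
        _ ≤ _ := Real.exp_le_exp.2 (by have := hkt n; gcongr)
    calc _ = (k n * ε n) * (1 + ε n * C) ^ k n * ((ε n)⁻¹ * ‖A n - exp (ε n • X)‖) := by
          field_simp
      _ ≤ _ := by have := hkt n; gcongr
  have hlim : Tendsto (fun n => A n ^ k n) atTop (𝓝 (exp (t • X))) := by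
    have := hdiff.add hb1
    simpa using this
  exact hS.mem_of_tendsto hlim (Eventually.of_forall fun n => S.pow_mem (hA n) _)

/-- The hypothesis that all elements of a submonoid are invertible inside it. -/
def InvClosed (S : Submonoid 𝔸) : Prop := ∀ a ∈ S, ∃ b ∈ S, a * b = 1 ∧ b * a = 1

theorem lt_exp_neg_mem (S : Submonoid 𝔸) (hI : InvClosed S) (X : 𝔸) (h : exp X ∈ S) :
    exp (-X) ∈ S := by
  obtain ⟨b, hb, h1, _⟩ := hI _ h
  have : exp (-X) = b := by
    calc exp (-X) = exp (-X) * (exp X * b) := by rw [h1, mul_one]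
      _ = b := by rw [← mul_assoc, lt_exp_neg_mul, one_mul]
  rwa [this]

theorem lt_key' [NormOneClass 𝔸] (S : Submonoid 𝔸) (hS : IsClosed (S : Set 𝔸))
    (hI : InvClosed S) (A : ℕ → 𝔸)
    (hA : ∀ n, A n ∈ S) (ε : ℕ → ℝ) (hε : ∀ n, 0 < ε n) (hε0 : Tendsto ε atTop (𝓝 0)) (X : 𝔸)
    (hX : Tendsto (fun n => (ε n)⁻¹ • (A n - 1)) atTop (𝓝 X)) (t : ℝ) :
    exp (t • X) ∈ S := by
  rcases le_total 0 t with ht | ht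
  · exact lt_key S hS A hA ε hε hε0 X hX t ht
  · have := lt_exp_neg_mem S hI _ (lt_key S hS A hA ε hε hε0 X hX (-t) (by linarith))
    simpa using this

/-- The Lie algebra of a closed group of invertible elements. -/
def lieSub [NormOneClass 𝔸] (S : Submonoid 𝔸) (hS : IsClosed (S : Set 𝔸))
    (hI : InvClosed S) : Submodule ℝ 𝔸 where
  carrier := {X | ∀ t : ℝ, exp (t • X) ∈ S}
  zero_mem' := fun t => by simp [exp_zero, S.one_mem]
  smul_mem' := fun c X hX t => by rw [smul_smul]; exact hX _
  add_mem' := by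
    intro X Y hX hY
    set ε : ℕ → ℝ := fun n => 1 / ((n : ℝ) + 1)
    have hε : ∀ n, 0 < ε n := fun n => by positivity
    have hε0 : Tendsto ε atTop (𝓝 0) := tendsto_one_div_add_atTop_nhds_zero_nat
    have hε' : Tendsto ε atTop (𝓝[≠] 0) :=
      tendsto_nhdsWithin_iff.2 ⟨hε0, Eventually.of_forall fun n => (hε n).ne'⟩
    refine lt_key' S hS hI (fun n => exp (ε n • X) * exp (ε n • Y))
      (fun n => S.mul_mem (hX _) (hY _)) ε hε hε0 (X + Y) ?_
    have e : (fun n => (ε n)⁻¹ • (exp (ε n • X) * exp (ε n • Y) - 1)) =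
        fun n => (ε n)⁻¹ • (exp (ε n • X) - 1) * exp (ε n • Y) +
          (ε n)⁻¹ • (exp (ε n • Y) - 1) := by
      ext n
      rw [smul_mul_assoc, ← smul_add]; congr 1; noncomm_ring
    rw [e]
    have h1 := (lt_slope X).comp hε'
    have h2 := (lt_slope Y).comp hε'
    have h3 : Tendsto (fun n => exp (ε n • Y)) atTop (𝓝 1) := by
      have := (lt_exp_cont.tendsto ((0 : ℝ) • Y)).comp (hε0.smul_const Y)
      simpa [exp_zero, Function.comp_def] using this
    have := (h1.mul h3).add h2
    simpa using this

theorem mem_lieSub [NormOneClass 𝔸] (S : Submonoid 𝔸) (hS : IsClosed (S : Set 𝔸))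
    (hI : InvClosed S) (X : 𝔸) : X ∈ lieSub S hS hI ↔ ∀ t : ℝ, exp (t • X) ∈ S := Iff.rfl

theorem lieSub_bracket [NormOneClass 𝔸] [FiniteDimensional ℝ 𝔸] (S : Submonoid 𝔸)
    (hS : IsClosed (S : Set 𝔸)) (hI : InvClosed S) (X Y : 𝔸) (hX : X ∈ lieSub S hS hI)
    (hY : Y ∈ lieSub S hS hI) : X * Y - Y * X ∈ lieSub S hS hI := by
  have hcl : IsClosed (lieSub S hS hI : Set 𝔸) := Submodule.closed_of_finiteDimensional _
  have hm : ∀ t : ℝ, exp (t • X) * Y * exp (-(t • X)) ∈ lieSub S hS hI := by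
    intro t s
    have := lt_exp_conj (exp (t • X)) (exp (-(t • X))) (s • Y) (lt_exp_mul_neg _) (lt_exp_neg_mul _)
    rw [mul_smul_comm, smul_mul_assoc] at this
    rw [this]
    exact S.mul_mem (S.mul_mem (hX _) (hY _)) (lt_exp_neg_mem S hI _ (hX _))
  have hd : HasDerivAt (fun t : ℝ => exp (t • X) * Y * exp (-(t • X))) (X * Y - Y * X) 0 := by
    have h1 := hasDerivAt_exp_smul_const (𝕂 := ℝ) X (0 : ℝ)
    have h2 := hasDerivAt_exp_smul_const (𝕂 := ℝ) (-X) (0 : ℝ)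
    have := (h1.mul_const Y).mul h2
    have e : (fun t : ℝ => exp (t • X) * Y * exp (-(t • X))) =
        ((fun t : ℝ => exp (t • X) * Y) * fun t : ℝ => exp (t • -X)) := by
      ext t; simp
    rw [e]
    refine this.congr_deriv ?_
    simp [exp_zero, sub_eq_add_neg]
  rw [hasDerivAt_iff_tendsto_slope] at hd
  refine hcl.mem_of_tendsto hd (Eventually.of_forall fun t => ?_)
  rw [slope_def_module]
  exact Submodule.smul_mem _ _ (Submodule.sub_mem _ (hm _) (hm _))

/-- Near the identity, a closed group is the image of its Lie algebra under `exp`. -/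
theorem lieSub_nhds [NormOneClass 𝔸] [FiniteDimensional ℝ 𝔸] (S : Submonoid 𝔸)
    (hS : IsClosed (S : Set 𝔸)) (hI : InvClosed S) :
    ∃ U ∈ 𝓝 (1 : 𝔸), ∀ a ∈ U, a ∈ S → ∃ X ∈ lieSub S hS hI, exp X = a := by
  set 𝔥 := lieSub S hS hI with h𝔥
  obtain ⟨𝔪, hc⟩ := Submodule.exists_isCompl 𝔥
  let f : 𝔥 × 𝔪 → 𝔸 := fun p => exp (p.1 : 𝔸) * (1 + p.2)
  let e : (𝔥 × 𝔪) ≃L[ℝ] 𝔸 := (Submodule.prodEquivOfIsCompl 𝔥 𝔪 hc).toContinuousLinearEquiv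
  have hf : HasStrictFDerivAt f (e : (𝔥 × 𝔪) →L[ℝ] 𝔸) 0 := by
    have h1 : HasStrictFDerivAt (fun p : 𝔥 × 𝔪 => exp (p.1 : 𝔸))
        ((1 : 𝔸 →L[ℝ] 𝔸).comp (𝔥.subtypeL.comp (ContinuousLinearMap.fst ℝ 𝔥 𝔪))) 0 := by
      refine HasStrictFDerivAt.comp (g := exp) (0 : 𝔥 × 𝔪) ?_ (ContinuousLinearMap.hasStrictFDerivAt
        (𝔥.subtypeL.comp (ContinuousLinearMap.fst ℝ 𝔥 𝔪)))
      simpa using hasStrictFDerivAt_exp_zero (𝕂 := ℝ) (𝔸 := 𝔸)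
    have h2 : HasStrictFDerivAt (fun p : 𝔥 × 𝔪 => (1 : 𝔸) + p.2)
        (𝔪.subtypeL.comp (ContinuousLinearMap.snd ℝ 𝔥 𝔪)) 0 :=
      (ContinuousLinearMap.hasStrictFDerivAt
        (𝔪.subtypeL.comp (ContinuousLinearMap.snd ℝ 𝔥 𝔪))).const_add 1
    have h3 := h1.mul' h2
    refine HasStrictFDerivAt.congr_fderiv (f' := _) h3 ?_
    refine ContinuousLinearMap.ext fun p => ?_
    change exp ((0 : 𝔥) : 𝔸) * (p.2 : 𝔸) + (p.1 : 𝔸) * (1 + ((0 : 𝔪) : 𝔸)) = (p.1 : 𝔸) + p.2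
    simp [exp_zero, add_comm]
  have hmap := hf.map_nhds_eq_of_equiv
  have hf0 : f 0 = 1 := by simp [f, exp_zero]
  rw [hf0] at hmap
  by_contra hcon
  push Not at hcon
  -- a punctured sequence in the complement
  have hseq : ∀ n : ℕ, ∃ p : 𝔥 × 𝔪, ‖p‖ < 1 / ((n : ℝ) + 1) ∧ f p ∈ S ∧ p.2 ≠ 0 := by
    intro n
    have hball : Metric.ball (0 : 𝔥 × 𝔪) (1 / ((n : ℝ) + 1)) ∈ 𝓝 (0 : 𝔥 × 𝔪) :=
      Metric.ball_mem_nhds _ (by positivity)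
    have hU : f '' Metric.ball (0 : 𝔥 × 𝔪) (1 / ((n : ℝ) + 1)) ∈ 𝓝 (1 : 𝔸) := by
      rw [← hmap]; exact image_mem_map hball
    obtain ⟨a, ⟨p, hp, rfl⟩, haS, hne⟩ := hcon _ hU
    refine ⟨p, by simpa using hp, haS, fun h0 => ?_⟩
    exact hne p.1 p.1.2 (by simp [f, h0])
  choose p hp hpS hp2 using hseq
  have hp0 : Tendsto (fun n => ‖p n‖) atTop (𝓝 0) :=
    squeeze_zero (fun n => norm_nonneg _) (fun n => (hp n).le) tendsto_one_div_add_atTop_nhds_zero_nat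
  have hYS : ∀ n, (1 : 𝔸) + (p n).2 ∈ S := by
    intro n
    have h1 : exp (-((p n).1 : 𝔸)) ∈ S := by
      have := (p n).1.2 (-1)
      simpa using this
    have h2 := S.mul_mem h1 (hpS n)
    simp only [f] at h2
    rwa [← mul_assoc, lt_exp_neg_mul, one_mul] at h2
  set ε : ℕ → ℝ := fun n => ‖(p n).2‖
  have hε : ∀ n, 0 < ε n := fun n => norm_pos_iff.2 (hp2 n)
  have hε0 : Tendsto ε atTop (𝓝 0) :=
    squeeze_zero (fun n => norm_nonneg _) (fun n => norm_snd_le (p n)) hp0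
  have hsph : ∀ n, (ε n)⁻¹ • (p n).2 ∈ Metric.sphere (0 : 𝔪) 1 := by
    intro n
    rw [mem_sphere_zero_iff_norm, norm_smul, norm_inv, Real.norm_of_nonneg (hε n).le]
    exact inv_mul_cancel₀ (hε n).ne'
  obtain ⟨Y, hY, φ, hφ, hlim⟩ := (isCompact_sphere (0 : 𝔪) 1).tendsto_subseq hsph
  have hYh : (Y : 𝔸) ∈ 𝔥 := by
    refine lt_key' S hS hI (fun n => 1 + (p (φ n)).2) (fun n => hYS _) (ε ∘ φ)
      (fun n => hε _) (hε0.comp hφ.tendsto_atTop) _ ?_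
    have := (𝔪.subtypeL.continuous.tendsto Y).comp hlim
    simpa [Function.comp_def] using this
  have hY0 : (Y : 𝔸) = 0 := by
    have := (Submodule.disjoint_def.1 hc.disjoint) _ hYh Y.2
    exact this
  have : Y = 0 := Subtype.ext hY0
  rw [this] at hY
  simp at hY

theorem lieSub_le_dimH [NormOneClass 𝔸] [FiniteDimensional ℝ 𝔸] (S : Submonoid 𝔸)
    (hS : IsClosed (S : Set 𝔸)) (hI : InvClosed S) :
    (Module.finrank ℝ (lieSub S hS hI) : ENNReal) ≤ dimH (S : Set 𝔸) := by
  set 𝔥 := lieSub S hS hI with h𝔥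
  obtain ⟨π, hπ⟩ := LinearMap.exists_leftInverse_of_injective 𝔥.subtype (Submodule.ker_subtype _)
  let πL : 𝔸 →L[ℝ] 𝔥 := LinearMap.toContinuousLinearMap π
  let f : 𝔥 → 𝔥 := fun X => πL (exp (X : 𝔸))
  have hf : HasStrictFDerivAt f ((ContinuousLinearEquiv.refl ℝ 𝔥 : 𝔥 ≃L[ℝ] 𝔥) : 𝔥 →L[ℝ] 𝔥) 0 := by
    have h1 : HasStrictFDerivAt (fun p : 𝔥 => exp (p : 𝔸))
        ((1 : 𝔸 →L[ℝ] 𝔸).comp 𝔥.subtypeL) 0 := by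
      refine HasStrictFDerivAt.comp (g := exp) (0 : 𝔥) ?_ 𝔥.subtypeL.hasStrictFDerivAt
      simpa using hasStrictFDerivAt_exp_zero (𝕂 := ℝ) (𝔸 := 𝔸)
    have h2 := πL.hasStrictFDerivAt.comp (0 : 𝔥) h1
    refine h2.congr_fderiv ?_
    ext x
    have := LinearMap.congr_fun hπ x
    simp only [LinearMap.comp_apply, Submodule.subtype_apply, LinearMap.id_apply] at this
    simp [πL, this]
  have hmap := hf.map_nhds_eq_of_equiv
  have hr : Set.range f ∈ 𝓝 (f 0) := by rw [← hmap]; exact range_mem_map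
  rw [← Real.dimH_of_mem_nhds hr]
  have hsub : Set.range f ⊆ πL '' (S : Set 𝔸) := by
    rintro _ ⟨X, rfl⟩
    exact ⟨_, by simpa using X.2 1, rfl⟩
  exact (dimH_mono hsub).trans (πL.lipschitz.dimH_image_le _)

theorem dimH_le_lieSub [NormOneClass 𝔸] [FiniteDimensional ℝ 𝔸] (S : Submonoid 𝔸)
    (hS : IsClosed (S : Set 𝔸)) (hI : InvClosed S) :
    dimH (S : Set 𝔸) ≤ (Module.finrank ℝ (lieSub S hS hI) : ENNReal) := by
  set 𝔥 := lieSub S hS hI with h𝔥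
  by_contra hcon
  push Not at hcon
  haveI : SecondCountableTopology 𝔸 :=
    haveI := FiniteDimensional.proper ℝ 𝔸
    inferInstance
  obtain ⟨x, hx, hlt⟩ := exists_mem_nhdsWithin_lt_dimH_of_lt_dimH hcon
  obtain ⟨U, hU, hUS⟩ := lieSub_nhds S hS hI
  obtain ⟨y, hy, hxy, hyx⟩ := hI x hx
  have hV : (fun a => y * a) ⁻¹' U ∈ 𝓝 x := by
    apply (continuous_const_mul y).continuousAt.preimage_mem_nhds
    rwa [hyx]
  have h1 := hlt _ (inter_mem_nhdsWithin (S : Set 𝔸) hV)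
  let g : 𝔥 → 𝔸 := fun X => x * exp (X : 𝔸)
  have hsub : (S : Set 𝔸) ∩ (fun a => y * a) ⁻¹' U ⊆ Set.range g := by
    rintro a ⟨haS, haU⟩
    obtain ⟨X, hX, hXe⟩ := hUS _ haU (S.mul_mem hy haS)
    refine ⟨⟨X, hX⟩, ?_⟩
    simp only [g, hXe]
    rw [← mul_assoc, hxy, one_mul]
  have hg : ContDiff ℝ 1 g := by
    have he : ContDiff ℝ 1 (exp : 𝔸 → 𝔸) :=
      contDiff_iff_contDiffAt.2 fun z => (exp_analytic (𝕂 := ℝ) z).contDiffAt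
    exact contDiff_const.mul (he.comp 𝔥.subtypeL.contDiff)
  exact absurd (h1.trans_le ((dimH_mono hsub).trans hg.dimH_range_le)) (lt_irrefl _)

theorem dimH_eq_lieSub [NormOneClass 𝔸] [FiniteDimensional ℝ 𝔸] (S : Submonoid 𝔸)
    (hS : IsClosed (S : Set 𝔸)) (hI : InvClosed S) :
    dimH (S : Set 𝔸) = (Module.finrank ℝ (lieSub S hS hI) : ENNReal) :=
  le_antisymm (dimH_le_lieSub S hS hI) (lieSub_le_dimH S hS hI)

theorem lt_exp_sq_neg_one (X : 𝔸) (hX : X * X = -1) (t : ℝ) :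
    exp (t • X) = Real.cos t • (1 : 𝔸) + Real.sin t • X := by
  letI := NormedAlgebra.restrictScalars ℚ ℝ 𝔸
  let φ : ℂ →ₐ[ℝ] 𝔸 := Complex.lift ⟨X, hX⟩
  have hφ : Continuous φ := φ.toLinearMap.continuous_of_finiteDimensional
  have h := map_exp φ hφ ((t : ℂ) * Complex.I)
  have e1 : (φ ((t : ℂ) * Complex.I)) = t • X := by
    simp [φ, Algebra.smul_def]
  rw [e1, ← Complex.exp_eq_exp_ℂ, Complex.exp_mul_I] at h
  rw [← h]
  rw [← Complex.ofReal_cos, ← Complex.ofReal_sin]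
  simp only [φ, Algebra.smul_def]
  simp [-Complex.ofReal_cos, -Complex.ofReal_sin, Algebra.smul_def]

end LieTheory


section CrossAlgebra

open Matrix Module

theorem cr_dot_ne {v : Fin 3 → ℝ} (hv : v ≠ 0) : v ⬝ᵥ v ≠ 0 := by
  rwa [Ne, dotProduct_self_eq_zero]

theorem cr_expand (n z : Fin 3 → ℝ) :
    (n ⬝ᵥ n) • z = (n ⬝ᵥ z) • n + n ⨯₃ (z ⨯₃ n) := by
  ext i
  fin_cases i <;> simp [cross_apply, dotProduct, Fin.sum_univ_three] <;> ring

theorem cr_lagrange (z x y : Fin 3 → ℝ) :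
    z ⨯₃ (x ⨯₃ y) = (z ⬝ᵥ y) • x - (z ⬝ᵥ x) • y := by
  ext i
  fin_cases i <;> simp [cross_apply, dotProduct, Fin.sum_univ_three] <;> ring

theorem cr_ideal (V : Submodule ℝ (Fin 3 → ℝ)) (v : Fin 3 → ℝ) (hv : v ∈ V) (hv0 : v ≠ 0)
    (h : ∀ z, ∀ x ∈ V, z ⨯₃ x ∈ V) (z : Fin 3 → ℝ) : z ∈ V := by
  have h1 : (v ⬝ᵥ v) • z ∈ V := by
    rw [cr_expand]
    exact V.add_mem (V.smul_mem _ hv) (h _ _ (h _ _ hv))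
  exact (V.smul_mem_iff (cr_dot_ne hv0)).1 h1

theorem cr_closed (V : Submodule ℝ (Fin 3 → ℝ)) (h : ∀ x ∈ V, ∀ y ∈ V, x ⨯₃ y ∈ V)
    (hV : 2 ≤ finrank ℝ V) : V = ⊤ := by
  obtain ⟨f, hf⟩ := exists_linearIndependent_of_le_finrank hV
  have hf' : LinearIndependent ℝ ![((f 0 : V) : Fin 3 → ℝ), (f 1 : V)] := by
    have h1 := hf.map' V.subtype V.ker_subtype
    have e : (V.subtype ∘ f) = ![((f 0 : V) : Fin 3 → ℝ), (f 1 : V)] := by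
      ext i j; fin_cases i <;> rfl
    rwa [e] at h1
  have hn := crossProduct_ne_zero_iff_linearIndependent.2 hf'
  set x : Fin 3 → ℝ := ((f 0 : V) : Fin 3 → ℝ)
  set y : Fin 3 → ℝ := ((f 1 : V) : Fin 3 → ℝ)
  have hx : x ∈ V := (f 0).2
  have hy : y ∈ V := (f 1).2
  rw [eq_top_iff]
  intro z _
  have h1 : ((x ⨯₃ y) ⬝ᵥ (x ⨯₃ y)) • z ∈ V := by
    rw [cr_expand]
    refine V.add_mem (V.smul_mem _ (h _ hx _ hy)) (h _ (h _ hx _ hy) _ ?_)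
    rw [cr_lagrange]
    exact V.sub_mem (V.smul_mem _ hx) (V.smul_mem _ hy)
  exact (V.smul_mem_iff (cr_dot_ne hn)).1 h1

abbrev V3 := Fin 3 → ℝ

/-- Closed under the product Lie bracket. -/
def BrClosed (W : Submodule ℝ (V3 × V3)) : Prop :=
  ∀ p ∈ W, ∀ q ∈ W, ((p.1 ⨯₃ q.1, p.2 ⨯₃ q.2) : V3 × V3) ∈ W

theorem cr_finrank (W : Submodule ℝ (V3 × V3)) :
    finrank ℝ (W.map (LinearMap.fst ℝ V3 V3)) + finrank ℝ (W.comap (LinearMap.inr ℝ V3 V3))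
      = finrank ℝ W := by
  have h := LinearMap.finrank_range_add_finrank_ker ((LinearMap.fst ℝ V3 V3).domRestrict W)
  rw [← h, LinearMap.range_domRestrict]
  congr 1
  refine LinearEquiv.finrank_eq (LinearEquiv.ofBijective
    (LinearMap.codRestrict _ (LinearMap.codRestrict W
      ((LinearMap.inr ℝ V3 V3).comp (W.comap (LinearMap.inr ℝ V3 V3)).subtype)
      (fun x => x.2)) ?_) ⟨?_, ?_⟩)
  · intro x; rfl
  · intro x y hxy
    have : ((0, (x : V3)) : V3 × V3) = (0, (y : V3)) :=
      congrArg (fun z : LinearMap.ker ((LinearMap.fst ℝ V3 V3).domRestrict W) => ((z : W) : V3 × V3)) hxy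
    exact Subtype.ext (Prod.mk.inj this).2
  · rintro ⟨⟨⟨u, w⟩, hW⟩, hk⟩
    have hu : u = 0 := hk
    subst hu
    exact ⟨⟨w, hW⟩, rfl⟩

theorem cr_dichotomy_aux (W : Submodule ℝ (V3 × V3)) (hW : BrClosed W)
    (hL : ∀ u : V3, ((u, 0) : V3 × V3) ∈ W) (h4 : 4 ≤ finrank ℝ W) :
    W = ⊤ ∨ (finrank ℝ W = 4 ∧ ∃ w : V3, w ⬝ᵥ w = 1 ∧ ∀ p, p ∈ W ↔ ∃ c : ℝ, p.2 = c • w) := by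
  have hmap : W.map (LinearMap.fst ℝ V3 V3) = ⊤ := by
    rw [eq_top_iff]; intro u _; exact ⟨(u, 0), hL u, rfl⟩
  have hf := cr_finrank W
  rw [hmap, finrank_top] at hf
  simp only [finrank_fintype_fun_eq_card, Fintype.card_fin] at hf
  set V := W.comap (LinearMap.inr ℝ V3 V3) with hV
  have hmem : ∀ p : V3 × V3, p ∈ W ↔ p.2 ∈ V := by
    rintro ⟨u, w⟩
    have e : ((u, w) : V3 × V3) = (u, 0) + (0, w) := by simp
    rw [e, W.add_mem_iff_right (hL u)]
    simp [hV]
  by_cases h2 : 2 ≤ finrank ℝ V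
  · left
    have : V = ⊤ := cr_closed V (fun x hx y hy => by
      have := hW (0, x) hx (0, y) hy
      exact (hmem _).1 this) h2
    rw [eq_top_iff]
    intro p _
    rw [hmem, this]; trivial
  · right
    have h1 : finrank ℝ V = 1 := by omega
    refine ⟨by omega, ?_⟩
    obtain ⟨v, hv0, hv⟩ := finrank_eq_one_iff'.1 h1
    have hv0' : (v : V3) ≠ 0 := fun h => hv0 (Subtype.ext h)
    have hpos : 0 < (v : V3) ⬝ᵥ v :=
      lt_of_le_of_ne (by simpa using dotProduct_self_star_nonneg (v : V3)) (cr_dot_ne hv0').symm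
    set s := Real.sqrt ((v : V3) ⬝ᵥ v)
    have hs : s * s = (v : V3) ⬝ᵥ v := Real.mul_self_sqrt hpos.le
    have hs0 : s ≠ 0 := (Real.sqrt_pos.2 hpos).ne'
    refine ⟨s⁻¹ • (v : V3), ?_, fun p => ?_⟩
    · rw [smul_dotProduct, dotProduct_smul, ← hs]
      simp only [smul_eq_mul]; field_simp
    · rw [hmem]
      constructor
      · intro hp
        obtain ⟨c, hc⟩ := hv ⟨p.2, hp⟩
        refine ⟨c * s, ?_⟩
        rw [smul_smul, mul_assoc, mul_inv_cancel₀ hs0, mul_one]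
        exact (congrArg Subtype.val hc).symm
      · rintro ⟨c, hc⟩
        rw [hc]
        exact V.smul_mem _ (V.smul_mem _ v.2)

theorem cr_exists (W : Submodule ℝ (V3 × V3)) (hW : BrClosed W) (h4 : 4 ≤ finrank ℝ W) :
    (∀ u : V3, ((u, 0) : V3 × V3) ∈ W) ∨ (∀ u : V3, ((0, u) : V3 × V3) ∈ W) := by
  have hf := cr_finrank W
  by_cases h2 : 2 ≤ finrank ℝ (W.map (LinearMap.fst ℝ V3 V3))
  · left
    have htop := cr_closed _ (by
      rintro _ ⟨p, hp, rfl⟩ _ ⟨q, hq, rfl⟩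
      exact ⟨_, hW p hp q hq, rfl⟩) h2
    -- a nonzero element of the form `(v, 0)`
    have hker : ∃ v : V3, v ≠ 0 ∧ ((v, 0) : V3 × V3) ∈ W := by
      by_contra hcon
      push Not at hcon
      have hinj : Function.Injective ((LinearMap.snd ℝ V3 V3).domRestrict W) := by
        rw [← LinearMap.ker_eq_bot, LinearMap.ker_eq_bot']
        rintro ⟨⟨u, w⟩, hm⟩ h0
        have hw : w = 0 := h0
        subst hw
        have : u = 0 := by
          by_contra hu
          exact hcon u hu hm
        subst this
        rfl
      have := LinearMap.finrank_le_finrank_of_injective hinj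
      simp only [finrank_fintype_fun_eq_card, Fintype.card_fin] at this
      omega
    obtain ⟨v, hv0, hv⟩ := hker
    intro u
    refine cr_ideal (W.comap (LinearMap.inl ℝ V3 V3)) v hv hv0 (fun z x hx => ?_) u
    have hz : z ∈ W.map (LinearMap.fst ℝ V3 V3) := by rw [htop]; trivial
    obtain ⟨p, hp, rfl⟩ := hz
    have := hW p hp (x, 0) hx
    simpa using this
  · right
    have h3 : 2 ≤ finrank ℝ (W.comap (LinearMap.inr ℝ V3 V3)) := by omega
    have htop := cr_closed _ (fun x hx y hy => by
      have := hW (0, x) hx (0, y) hy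
      simpa using this) h3
    intro u
    have : u ∈ W.comap (LinearMap.inr ℝ V3 V3) := by rw [htop]; trivial
    exact this

theorem cr_dichotomy (W : Submodule ℝ (V3 × V3)) (hW : BrClosed W) (h4 : 4 ≤ finrank ℝ W) :
    W = ⊤ ∨ (finrank ℝ W = 4 ∧ ∃ w : V3, w ⬝ᵥ w = 1 ∧
      ((∀ p, p ∈ W ↔ ∃ c : ℝ, p.2 = c • w) ∨ (∀ p, p ∈ W ↔ ∃ c : ℝ, p.1 = c • w))) := by
  rcases cr_exists W hW h4 with h | h
  · rcases cr_dichotomy_aux W hW h h4 with h | ⟨h, w, hw, hp⟩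
    · exact Or.inl h
    · exact Or.inr ⟨h, w, hw, Or.inl hp⟩
  · let e := LinearEquiv.prodComm ℝ V3 V3
    let W' : Submodule ℝ (V3 × V3) := W.map (e : (V3 × V3) →ₗ[ℝ] (V3 × V3))
    have hm : ∀ u w : V3, ((u, w) : V3 × V3) ∈ W' ↔ (w, u) ∈ W := by
      intro u w
      constructor
      · rintro ⟨⟨a, b⟩, hq, hqe⟩
        have : ((b, a) : V3 × V3) = (u, w) := hqe
        obtain ⟨rfl, rfl⟩ := Prod.mk.inj this
        exact hq
      · intro hq
        exact ⟨_, hq, rfl⟩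
    have hfr : finrank ℝ W' = finrank ℝ W := LinearEquiv.finrank_map_eq e W
    have hW' : BrClosed W' := by
      rintro ⟨a, b⟩ hp ⟨c, d⟩ hq
      rw [hm] at hp hq ⊢
      exact hW _ hp _ hq
    rcases cr_dichotomy_aux W' hW' (fun u => (hm _ _).2 (h u)) (hfr ▸ h4) with h | ⟨h, w, hw, hp⟩
    · left
      rw [eq_top_iff]
      rintro ⟨u, w⟩ _
      rw [← hm, h]; trivial
    · refine Or.inr ⟨hfr ▸ h, w, hw, Or.inr ?_⟩
      rintro ⟨u, v⟩
      rw [← hm, hp]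

end CrossAlgebra

section So4

open Matrix Module

abbrev M4 := Matrix (Fin 4) (Fin 4) ℝ

/-- Left multiplication by an imaginary quaternion. -/
def Lm (u : V3) : M4 :=
  !![0, -u 0, -u 1, -u 2; u 0, 0, -u 2, u 1; u 1, u 2, 0, -u 0; u 2, -u 1, u 0, 0]

/-- Right multiplication by the conjugate of an imaginary quaternion. -/
def Rm (u : V3) : M4 :=
  !![0, u 0, u 1, u 2; -u 0, 0, -u 2, u 1; -u 1, u 2, 0, -u 0; -u 2, -u 1, u 0, 0]

theorem Lm_skew (u : V3) : (Lm u)ᵀ = -Lm u := by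
  ext i j; fin_cases i <;> fin_cases j <;> simp [Lm]

theorem Rm_skew (u : V3) : (Rm u)ᵀ = -Rm u := by
  ext i j; fin_cases i <;> fin_cases j <;> simp [Rm]

theorem Lm_sq (u : V3) : Lm u * Lm u = -(u ⬝ᵥ u) • (1 : M4) := by
  ext i j; fin_cases i <;> fin_cases j <;>
    simp [Lm, mul_apply, Fin.sum_univ_four, dotProduct, Fin.sum_univ_three] <;> ring

theorem Rm_sq (u : V3) : Rm u * Rm u = -(u ⬝ᵥ u) • (1 : M4) := by
  ext i j; fin_cases i <;> fin_cases j <;>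
    simp [Rm, mul_apply, Fin.sum_univ_four, dotProduct, Fin.sum_univ_three] <;> ring

theorem Lm_Rm (u w : V3) : Lm u * Rm w = Rm w * Lm u := by
  ext i j; fin_cases i <;> fin_cases j <;>
    simp [Lm, Rm, mul_apply, Fin.sum_univ_four] <;> ring

theorem Lm_br (u w : V3) : Lm u * Lm w - Lm w * Lm u = (2 : ℝ) • Lm (u ⨯₃ w) := by
  ext i j; fin_cases i <;> fin_cases j <;>
    simp [Lm, cross_apply, mul_apply, Fin.sum_univ_four] <;> ring

theorem Rm_br (u w : V3) : Rm u * Rm w - Rm w * Rm u = (2 : ℝ) • Rm (u ⨯₃ w) := by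
  ext i j; fin_cases i <;> fin_cases j <;>
    simp [Rm, cross_apply, mul_apply, Fin.sum_univ_four] <;> ring

/-- The isomorphism of `ℝ³ × ℝ³` with the skew-symmetric matrices. -/
def phi4 : (V3 × V3) →ₗ[ℝ] M4 where
  toFun p := Lm p.1 + Rm p.2
  map_add' p q := by
    ext i j; fin_cases i <;> fin_cases j <;> simp [Lm, Rm] <;> ring
  map_smul' c p := by
    ext i j; fin_cases i <;> fin_cases j <;> simp [Lm, Rm] <;> ring

theorem phi4_apply (u w : V3) : phi4 (u, w) = Lm u + Rm w := rfl

theorem phi4_inj : Function.Injective phi4 := by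
  rw [← LinearMap.ker_eq_bot, LinearMap.ker_eq_bot']
  rintro ⟨u, w⟩ h
  rw [phi4_apply] at h
  have h1 := congrFun (congrFun h 0) 1
  have h2 := congrFun (congrFun h 0) 2
  have h3 := congrFun (congrFun h 0) 3
  have h4 := congrFun (congrFun h 2) 3
  have h5 := congrFun (congrFun h 1) 3
  have h6 := congrFun (congrFun h 1) 2
  simp [Lm, Rm] at h1 h2 h3 h4 h5 h6
  ext i
  · fin_cases i <;> simp <;> linarith
  · fin_cases i <;> simp <;> linarith

theorem phi4_skew (p : V3 × V3) : (phi4 p)ᵀ = -phi4 p := by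
  change (Lm p.1 + Rm p.2)ᵀ = -(Lm p.1 + Rm p.2)
  rw [transpose_add, Lm_skew, Rm_skew]; abel

theorem phi4_surj (X : M4) (hX : Xᵀ = -X) : ∃ p, phi4 p = X := by
  have h : ∀ i j, X j i = - X i j := fun i j => congrFun (congrFun hX i) j
  have h0 : ∀ i, X i i = 0 := fun i => by linarith [h i i]
  refine ⟨(![(-X 0 1 - X 2 3) / 2, (-X 0 2 + X 1 3) / 2, (-X 0 3 - X 1 2) / 2],
    ![(X 0 1 - X 2 3) / 2, (X 0 2 + X 1 3) / 2, (X 0 3 - X 1 2) / 2]), ?_⟩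
  rw [phi4_apply]
  ext i j
  fin_cases i <;> fin_cases j <;> simp [Lm, Rm, h0] <;>
    linarith [h 0 1, h 0 2, h 0 3, h 1 2, h 1 3, h 2 3]

theorem phi4_br (u w u' w' : V3) : phi4 (u, w) * phi4 (u', w') - phi4 (u', w') * phi4 (u, w)
    = (2 : ℝ) • phi4 (u ⨯₃ u', w ⨯₃ w') := by
  simp only [phi4_apply, smul_add, ← Lm_br, ← Rm_br, add_mul, mul_add, Lm_Rm]
  abel

theorem cross_zero_of_unit (w v : V3) (hw : w ⬝ᵥ w = 1) : v ⨯₃ w = 0 ↔ ∃ c : ℝ, v = c • w := by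
  constructor
  · intro h
    have := cr_expand w v
    rw [hw, h, one_smul] at this
    exact ⟨_, by simpa using this⟩
  · rintro ⟨c, rfl⟩
    simp

theorem phi4_comm (p q : V3 × V3) : phi4 p * phi4 q = phi4 q * phi4 p ↔
    p.1 ⨯₃ q.1 = 0 ∧ p.2 ⨯₃ q.2 = 0 := by
  rw [← sub_eq_zero]
  obtain ⟨a, b⟩ := p
  obtain ⟨c, d⟩ := q
  rw [phi4_br, smul_eq_zero_iff_right two_ne_zero]
  rw [map_eq_zero_iff _ phi4_inj]
  exact Prod.mk_eq_zero

theorem so4_class (𝔥 : Submodule ℝ M4) (hsk : ∀ X ∈ 𝔥, Xᵀ = -X)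
    (hbr : ∀ X ∈ 𝔥, ∀ Y ∈ 𝔥, X * Y - Y * X ∈ 𝔥) (h4 : 4 ≤ finrank ℝ 𝔥) :
    (finrank ℝ 𝔥 = 6 ∧ ∀ X : M4, Xᵀ = -X → X ∈ 𝔥) ∨
    (finrank ℝ 𝔥 = 4 ∧ ∃ r : M4, rᵀ = -r ∧ r * r = -1 ∧
      ∀ X : M4, Xᵀ = -X → (X ∈ 𝔥 ↔ X * r = r * X)) := by
  set W := 𝔥.comap phi4 with hWdef
  have hmap : W.map phi4 = 𝔥 := by
    apply Submodule.map_comap_eq_of_le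
    intro X hX
    exact phi4_surj X (hsk X hX)
  have hfr : finrank ℝ 𝔥 = finrank ℝ W := by
    conv_lhs => rw [← hmap]
    exact (LinearEquiv.finrank_eq (Submodule.equivMapOfInjective phi4 phi4_inj W)).symm
  have hmem : ∀ p, p ∈ W ↔ phi4 p ∈ 𝔥 := fun p => Iff.rfl
  have hW : BrClosed W := by
    rintro ⟨a, b⟩ hp ⟨c, d⟩ hq
    have := hbr _ hp _ hq
    rw [phi4_br] at this
    exact (𝔥.smul_mem_iff two_ne_zero).1 this
  rcases cr_dichotomy W hW (hfr ▸ h4) with h | ⟨h, w, hw, hp⟩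
  · left
    refine ⟨by rw [hfr, h, finrank_top]; simp, fun X hX => ?_⟩
    obtain ⟨p, rfl⟩ := phi4_surj X hX
    rw [← hmem, h]; trivial
  · right
    refine ⟨hfr.trans h, ?_⟩
    rcases hp with hp | hp
    · refine ⟨phi4 (0, w), phi4_skew _, ?_, fun X hX => ?_⟩
      · have : phi4 (0, w) = Rm w := by
          rw [phi4_apply]; ext i j; fin_cases i <;> fin_cases j <;> simp [Lm]
        rw [this, Rm_sq, hw]; simp
      · obtain ⟨p, rfl⟩ := phi4_surj X hX
        rw [← hmem, hp, phi4_comm, ← cross_zero_of_unit w _ hw]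
        simp
    · refine ⟨phi4 (w, 0), phi4_skew _, ?_, fun X hX => ?_⟩
      · have : phi4 (w, 0) = Lm w := by
          rw [phi4_apply]; ext i j; fin_cases i <;> fin_cases j <;> simp [Rm]
        rw [this, Lm_sq, hw]; simp
      · obtain ⟨p, rfl⟩ := phi4_surj X hX
        rw [← hmem, hp, phi4_comm, ← cross_zero_of_unit w _ hw]
        simp

end So4

section Generation

open Matrix

theorem J4_eq : J4 = !![0, 0, 1, 0; 0, 0, 0, 1; -1, 0, 0, 0; 0, -1, 0, 0] := by
  ext i j; fin_cases i <;> fin_cases j <;> simp [J4]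

theorem J4_eq_Rm : J4 = Rm ![0, 1, 0] := by
  rw [J4_eq]; ext i j; fin_cases i <;> fin_cases j <;> simp [Rm]

theorem exists_angle (c s : ℝ) (h : c ^ 2 + s ^ 2 = 1) :
    ∃ θ : ℝ, Real.cos θ = c ∧ Real.sin θ = s := by
  have hn : ‖(⟨c, s⟩ : ℂ)‖ = 1 := by
    rw [Complex.norm_def, Complex.normSq_mk]
    rw [show c * c + s * s = 1 by linarith]; simp
  have h0 : (⟨c, s⟩ : ℂ) ≠ 0 := by
    intro h0; rw [h0] at hn; simp at hn
  refine ⟨Complex.arg ⟨c, s⟩, ?_, ?_⟩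
  · rw [Complex.cos_arg h0, hn]; simp
  · rw [Complex.sin_arg, hn]; simp

/-- Unit quaternions are of the form `cos θ + sin θ X` with `X` a unit imaginary quaternion. -/
theorem unit_quat (a : ℝ) (u : V3) (h : a ^ 2 + u ⬝ᵥ u = 1) :
    ∃ (θ : ℝ) (v : V3), v ⬝ᵥ v = 1 ∧ a = Real.cos θ ∧ u = Real.sin θ • v := by
  by_cases hu : u = 0
  · subst hu
    obtain ⟨θ, h1, h2⟩ := exists_angle a 0 (by simpa using h)
    exact ⟨θ, ![1, 0, 0], by simp [dotProduct, Fin.sum_univ_three], h1.symm, by simp [h2]⟩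
  · have hpos : 0 < u ⬝ᵥ u := by
      refine lt_of_le_of_ne (by simpa using dotProduct_self_star_nonneg u) (Ne.symm ?_)
      rwa [Ne, dotProduct_self_eq_zero]
    set s := Real.sqrt (u ⬝ᵥ u)
    have hs : s * s = u ⬝ᵥ u := Real.mul_self_sqrt hpos.le
    have hs0 : s ≠ 0 := (Real.sqrt_pos.2 hpos).ne'
    obtain ⟨θ, h1, h2⟩ := exists_angle a s (by rw [← h, ← hs]; ring)
    refine ⟨θ, s⁻¹ • u, ?_, h1.symm, ?_⟩
    · rw [smul_dotProduct, dotProduct_smul, ← hs]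
      simp only [smul_eq_mul]; field_simp
    · rw [h2, smul_smul, mul_inv_cancel₀ hs0, one_smul]

theorem Lm_smul (c : ℝ) (u : V3) : Lm (c • u) = c • Lm u := by
  ext i j; fin_cases i <;> fin_cases j <;> simp [Lm]

theorem Rm_smul (c : ℝ) (u : V3) : Rm (c • u) = c • Rm u := by
  ext i j; fin_cases i <;> fin_cases j <;> simp [Rm]

/-- Left multiplication by a quaternion. -/
def Lq (a b c d : ℝ) : M4 := !![a, -b, -c, -d; b, a, -d, c; c, d, a, -b; d, -c, b, a]

theorem Lq_eq (a b c d : ℝ) : Lq a b c d = a • (1 : M4) + Lm ![b, c, d] := by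
  ext i j; fin_cases i <;> fin_cases j <;> simp [Lm, Lq]

theorem Lq_mem (T : Submonoid M4)
    (hT : ∀ v : V3, v ⬝ᵥ v = 1 → ∀ θ : ℝ, Real.cos θ • (1 : M4) + Real.sin θ • Lm v ∈ T)
    (a b c d : ℝ) (h : a ^ 2 + b ^ 2 + c ^ 2 + d ^ 2 = 1) : Lq a b c d ∈ T := by
  obtain ⟨θ, v, hv, ha, hu⟩ := unit_quat a ![b, c, d] (by
    simp [dotProduct, Fin.sum_univ_three]; linarith)
  rw [Lq_eq, hu, Lm_smul, ha]
  exact hT v hv θ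

theorem orth_diag (C : M4) (h1 : C * Cᵀ = 1) (h2 : Cᵀ * C = 1) (i : Fin 4) (hi : C i i = 1)
    (j : Fin 4) (hij : j ≠ i) : C i j = 0 ∧ C j i = 0 := by
  have e1 : ∑ k, C i k * C i k = 1 := by
    have := congrFun (congrFun h1 i) i
    simpa [mul_apply] using this
  have e2 : ∑ k, C k i * C k i = 1 := by
    have := congrFun (congrFun h2 i) i
    simpa [mul_apply] using this
  constructor
  · have := Finset.add_le_sum (f := fun k => C i k * C i k) (s := Finset.univ)
      (fun k _ => mul_self_nonneg _) (Finset.mem_univ i) (Finset.mem_univ j) hij.symm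
    rw [e1, hi] at this
    nlinarith [mul_self_nonneg (C i j)]
  · have := Finset.add_le_sum (f := fun k => C k i * C k i) (s := Finset.univ)
      (fun k _ => mul_self_nonneg _) (Finset.mem_univ i) (Finset.mem_univ j) hij.symm
    rw [e2, hi] at this
    nlinarith [mul_self_nonneg (C j i)]

theorem plane_rot_mem (T : Submonoid M4)
    (hT : ∀ v : V3, v ⬝ᵥ v = 1 → ∀ θ : ℝ, Real.cos θ • (1 : M4) + Real.sin θ • Lm v ∈ T)
    (hJ : ∀ θ : ℝ, Real.cos θ • (1 : M4) + Real.sin θ • J4 ∈ T)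
    (C : M4) (h1 : C * Cᵀ = 1) (h2 : Cᵀ * C = 1) (h00 : C 0 0 = 1) (h22 : C 2 2 = 1)
    (h33 : C 3 3 = C 1 1) (h31 : C 3 1 = - C 1 3) : C ∈ T := by
  have d0 := orth_diag C h1 h2 0 h00
  have d2 := orth_diag C h1 h2 2 h22
  have z01 := (d0 1 (by decide)); have z02 := (d0 2 (by decide)); have z03 := (d0 3 (by decide))
  have z21 := (d2 1 (by decide)); have z23 := (d2 3 (by decide))
  have hn : (C 1 1) ^ 2 + (C 1 3) ^ 2 = 1 := by
    have := congrFun (congrFun h1 1) 1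
    simp [mul_apply, Fin.sum_univ_four, z01.2, z21.2] at this
    linarith
  obtain ⟨θ, hc, hs⟩ := exists_angle _ _ hn
  have ec : C 1 1 = Real.cos (θ / 2) ^ 2 - Real.sin (θ / 2) ^ 2 := by
    rw [← hc, ← Real.cos_two_mul']; ring_nf
  have es : C 1 3 = 2 * Real.sin (θ / 2) * Real.cos (θ / 2) := by
    rw [← hs, ← Real.sin_two_mul]; ring_nf
  have hcs := Real.cos_sq_add_sin_sq (θ / 2)
  have hm := T.mul_mem (Lq_mem T hT (Real.cos (θ / 2)) 0 (Real.sin (θ / 2)) 0 (by linarith))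
    (hJ (θ / 2))
  convert hm using 1
  rw [J4_eq]
  ext i j
  fin_cases i <;> fin_cases j <;>
    simp [Lq, mul_apply, Fin.sum_univ_four, h00, h22, h33, h31, z01, z02, z03, z21, z23, ec, es] <;>
    first | ring1 | linarith

theorem Lq_orth (a b c d : ℝ) (h : a ^ 2 + b ^ 2 + c ^ 2 + d ^ 2 = 1) :
    Lq a b c d * (Lq a b c d)ᵀ = 1 := by
  ext i j
  fin_cases i <;> fin_cases j <;> simp [Lq, mul_apply, Fin.sum_univ_four] <;>
    first | ring1 | linarith

theorem Lq_J4 (a b c d : ℝ) : (Lq a b c d)ᵀ * J4 = J4 * (Lq a b c d)ᵀ := by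
  rw [J4_eq]
  ext i j
  fin_cases i <;> fin_cases j <;> simp [Lq, mul_apply, Fin.sum_univ_four]

/-- Product of the transpose of an orthogonal matrix with an orthogonal one. -/
theorem orth_mul (K B : M4) (hK : K * Kᵀ = 1) (h2 : Bᵀ * B = 1) :
    (Kᵀ * B) * (Kᵀ * B)ᵀ = 1 ∧ (Kᵀ * B)ᵀ * (Kᵀ * B) = 1 ∧ K * (Kᵀ * B) = B := by
  have e : (Kᵀ * B)ᵀ * (Kᵀ * B) = 1 := by
    rw [transpose_mul, transpose_transpose]
    calc Bᵀ * K * (Kᵀ * B) = Bᵀ * (K * Kᵀ) * B := by simp only [Matrix.mul_assoc]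
      _ = 1 := by rw [hK, Matrix.mul_one, h2]
  exact ⟨mul_eq_one_comm.1 e, e, by rw [← Matrix.mul_assoc, hK, Matrix.one_mul]⟩

theorem col_norm (B : M4) (h2 : Bᵀ * B = 1) :
    (B 0 0) ^ 2 + (B 1 0) ^ 2 + (B 2 0) ^ 2 + (B 3 0) ^ 2 = 1 := by
  have := congrFun (congrFun h2 0) 0
  simp [mul_apply, Fin.sum_univ_four] at this
  linarith

theorem Lq_col (B : M4) (h2 : Bᵀ * B = 1) :
    ((Lq (B 0 0) (B 1 0) (B 2 0) (B 3 0))ᵀ * B) 0 0 = 1 := by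
  have := col_norm B h2
  simp [Lq, mul_apply, Fin.sum_univ_four]
  linarith

theorem u2_gen (T : Submonoid M4)
    (hT : ∀ v : V3, v ⬝ᵥ v = 1 → ∀ θ : ℝ, Real.cos θ • (1 : M4) + Real.sin θ • Lm v ∈ T)
    (hJ : ∀ θ : ℝ, Real.cos θ • (1 : M4) + Real.sin θ • J4 ∈ T)
    (B : M4) (h2 : Bᵀ * B = 1) (hB : B * J4 = J4 * B) : B ∈ T := by
  have hn := col_norm B h2
  obtain ⟨o1, o2, o3⟩ := orth_mul _ B (Lq_orth _ _ _ _ hn) h2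
  rw [← o3]
  refine T.mul_mem (Lq_mem T hT _ _ _ _ hn) ?_
  set C := (Lq (B 0 0) (B 1 0) (B 2 0) (B 3 0))ᵀ * B with hC
  have hCJ : C * J4 = J4 * C := by
    rw [hC, Matrix.mul_assoc, hB, ← Matrix.mul_assoc, Lq_J4, Matrix.mul_assoc]
  have h00 : C 0 0 = 1 := Lq_col B h2
  have c1 := congrFun (congrFun hCJ 0) 2
  have c2 := congrFun (congrFun hCJ 1) 3
  have c3 := congrFun (congrFun hCJ 1) 1
  rw [J4_eq] at c1 c2 c3
  simp [mul_apply, Fin.sum_univ_four] at c1 c2 c3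
  exact plane_rot_mem T hT hJ C o1 o2 h00 (by linarith) (by linarith) (by linarith)

/-- Every orthogonal complex structure is conjugate to the standard one. -/
theorem exists_conj_J4 (r : M4) (hr : rᵀ = -r) (hrr : r * r = -1) :
    ∃ P : M4, P * Pᵀ = 1 ∧ P * r = J4 * P := by
  have h : ∀ i j, r j i = - r i j := fun i j => congrFun (congrFun hr i) j
  have h0 : ∀ i, r i i = 0 := fun i => by linarith [h i i]
  have hn : r 0 1 ^ 2 + r 0 2 ^ 2 + r 0 3 ^ 2 = 1 := by
    have := congrFun (congrFun hrr 0) 0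
    simp [mul_apply, Fin.sum_univ_four, h0, h 0 1, h 0 2, h 0 3] at this
    linarith
  obtain ⟨x, hx0, hxx, hxr⟩ : ∃ x : Fin 4 → ℝ, x 0 = 0 ∧ x ⬝ᵥ x = 1 ∧ x ⬝ᵥ r 0 = 0 := by
    by_cases hz : r 0 1 = 0 ∧ r 0 2 = 0
    · exact ⟨![0, 1, 0, 0], by simp, by simp [dotProduct, Fin.sum_univ_four],
        by simp [dotProduct, Fin.sum_univ_four, hz]⟩
    · have hpos : 0 < r 0 1 ^ 2 + r 0 2 ^ 2 := by
        by_contra hcon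
        push Not at hcon
        exact hz ⟨by nlinarith [sq_nonneg (r 0 1), sq_nonneg (r 0 2)],
          by nlinarith [sq_nonneg (r 0 1), sq_nonneg (r 0 2)]⟩
      set s := Real.sqrt (r 0 1 ^ 2 + r 0 2 ^ 2)
      have hs : s * s = r 0 1 ^ 2 + r 0 2 ^ 2 := Real.mul_self_sqrt hpos.le
      have hs0 : s ≠ 0 := (Real.sqrt_pos.2 hpos).ne'
      refine ⟨![0, -r 0 2 / s, r 0 1 / s, 0], by simp, ?_, ?_⟩
      · simp [dotProduct, Fin.sum_univ_four]
        field_simp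
        linarith
      · simp [dotProduct, Fin.sum_univ_four]
        ring
  have hr0 : (Pi.single 0 1 : Fin 4 → ℝ) ᵥ* r = r 0 := by simp; rfl
  have hskew : ∀ u v : Fin 4 → ℝ, (u ᵥ* r) ⬝ᵥ v = -(u ⬝ᵥ (v ᵥ* r)) := by
    intro u v
    rw [← dotProduct_mulVec, ← mulVec_transpose r v, hr, neg_mulVec, dotProduct_neg, neg_neg]
  have hsq : ∀ u : Fin 4 → ℝ, (u ᵥ* r) ᵥ* r = -u := by
    intro u; rw [vecMul_vecMul, hrr, vecMul_neg, vecMul_one]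
  set e : Fin 4 → ℝ := Pi.single 0 1 with he
  have hex : e ⬝ᵥ x = 0 := by simp [he, hx0]
  have hxe : x ⬝ᵥ e = 0 := by simp [he, hx0]
  have hee : e ⬝ᵥ e = 1 := by simp [he]
  have hself : ∀ u : Fin 4 → ℝ, u ⬝ᵥ (u ᵥ* r) = 0 := by
    intro u
    have := hskew u u
    rw [dotProduct_comm] at this
    linarith
  have hxer : x ⬝ᵥ (e ᵥ* r) = 0 := by rw [hr0]; exact hxr
  have hexr : e ⬝ᵥ (x ᵥ* r) = 0 := by
    have := hskew e x
    rw [dotProduct_comm, hxer] at this; linarith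
  have hrr' : ∀ u v : Fin 4 → ℝ, (u ᵥ* r) ⬝ᵥ (v ᵥ* r) = u ⬝ᵥ v := by
    intro u v; rw [hskew, hsq, dotProduct_neg, neg_neg]
  have hcomm : ∀ u v : Fin 4 → ℝ, (u ᵥ* r) ⬝ᵥ v = v ⬝ᵥ (u ᵥ* r) := fun u v => dotProduct_comm _ _
  refine ⟨Matrix.of ![e, x, e ᵥ* r, x ᵥ* r], ?_, ?_⟩
  · ext i j
    change (![e, x, e ᵥ* r, x ᵥ* r] i) ⬝ᵥ (![e, x, e ᵥ* r, x ᵥ* r] j) = _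
    fin_cases i <;> fin_cases j <;>
      simp [hex, hxe, hee, hxx, hself, hxer, hexr, hrr', hcomm, -dotProduct_single, -single_dotProduct]
  · rw [J4_eq]
    ext i j
    change ((![e, x, e ᵥ* r, x ᵥ* r] i) ᵥ* r) j = _
    fin_cases i <;> simp [mul_apply, Fin.sum_univ_four, hsq]

end Generation

section MainPart

open Matrix Filter Topology NormedSpace

attribute [local instance] Matrix.linftyOpNormedRing Matrix.linftyOpNormedAlgebra

abbrev O4 := ↥(Matrix.orthogonalGroup (Fin 4) ℝ)

/-- The set of matrices of a subgroup of `O(4)`, as a submonoid of the matrix ring. -/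
def matS (H : Subgroup O4) : Submonoid M4 :=
  H.toSubmonoid.map (Submonoid.subtype (Matrix.orthogonalGroup (Fin 4) ℝ))

theorem mem_matS (H : Subgroup O4) (a : M4) : a ∈ matS H ↔ ∃ A : O4, A ∈ H ∧ (A : M4) = a :=
  Iff.rfl

theorem coe_mem_matS (H : Subgroup O4) (A : O4) : (A : M4) ∈ matS H ↔ A ∈ H := by
  rw [mem_matS]
  constructor
  · rintro ⟨B, hB, h⟩
    rwa [← Subtype.ext h]
  · intro h
    exact ⟨A, h, rfl⟩

theorem o4_left (A : O4) : (A : M4)ᵀ * (A : M4) = 1 :=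
  (mem_orthogonalGroup_iff' (Fin 4) ℝ).1 A.2

theorem o4_right (A : O4) : (A : M4) * (A : M4)ᵀ = 1 :=
  (mem_orthogonalGroup_iff (Fin 4) ℝ).1 A.2

theorem o4_inv (A : O4) : ((A⁻¹ : O4) : M4) = (A : M4)ᵀ := rfl

theorem matS_inv (H : Subgroup O4) : InvClosed (matS H) := by
  rintro a ⟨A, hA, rfl⟩
  exact ⟨((A⁻¹ : O4) : M4), (coe_mem_matS H _).2 (H.inv_mem hA), o4_right A, o4_left A⟩

theorem matS_closed (H : Subgroup O4) (hH : IsClosed (H : Set O4)) :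
    IsClosed (matS H : Set M4) := by
  have hO : IsClosed ((Matrix.orthogonalGroup (Fin 4) ℝ : Set M4)) := by
    have : (Matrix.orthogonalGroup (Fin 4) ℝ : Set M4) = {A : M4 | A * Aᵀ = 1} := by
      ext A; exact mem_orthogonalGroup_iff (Fin 4) ℝ
    rw [this]
    exact isClosed_eq (by fun_prop) continuous_const
  exact (hO.isClosedEmbedding_subtypeVal.isClosedMap _ hH)

theorem dim_eq (H : Subgroup O4) (hH : IsClosed (H : Set O4)) :
    orth4SubgroupDim H =
      (Module.finrank ℝ (lieSub (matS H) (matS_closed H hH) (matS_inv H)) : ENNReal) := by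
  refine Eq.trans ?_ (dimH_eq_lieSub (matS H) (matS_closed H hH) (matS_inv H))
  let e0 : M4 ≃ₗ[ℝ] (Fin 4 → Fin 4 → ℝ) := (Matrix.ofLinearEquiv ℝ).symm
  let e : M4 ≃L[ℝ] (Fin 4 → Fin 4 → ℝ) := e0.toContinuousLinearEquiv
  rw [← e.dimH_image]
  unfold orth4SubgroupDim
  congr 1
  ext f
  constructor
  · rintro ⟨A, hA, rfl⟩
    exact ⟨(A : M4), (coe_mem_matS H A).2 hA, rfl⟩
  · rintro ⟨_, ⟨A, hA, rfl⟩, rfl⟩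
    exact ⟨A, hA, rfl⟩

theorem exp_orth_skew (X : M4) (h : ∀ t : ℝ, (exp (t • X))ᵀ * exp (t • X) = 1) : Xᵀ = -X := by
  have h1 : ∀ t : ℝ, exp (t • Xᵀ) = exp (t • (-X)) := by
    intro t
    rw [← transpose_smul, Matrix.exp_transpose, smul_neg]
    have e : exp (t • X) * exp (-(t • X)) = 1 := lt_exp_mul_neg (t • X)
    calc (exp (t • X))ᵀ = (exp (t • X))ᵀ * (exp (t • X) * exp (-(t • X))) := by
          rw [e, Matrix.mul_one]
      _ = _ := by rw [← Matrix.mul_assoc, h, Matrix.one_mul]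
  refine tendsto_nhds_unique ((lt_slope Xᵀ).congr fun t => ?_) (lt_slope (-X))
  exact congrArg (fun z : M4 => t⁻¹ • (z - 1)) (h1 t)

theorem o4lie_is_skew (H : Subgroup O4) (hH : IsClosed (H : Set O4)) (X : M4)
    (hX : X ∈ lieSub (matS H) (matS_closed H hH) (matS_inv H)) : Xᵀ = -X := by
  refine exp_orth_skew X fun t => ?_
  obtain ⟨A, _, hA⟩ := (mem_matS H _).1 (hX t)
  exact Eq.subst (motive := fun z : M4 => zᵀ * z = 1) hA (o4_left A)

/-- If the Lie algebra commutes with `r`, so does the connected group. -/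
theorem conn_comm (H : Subgroup O4) (hH : IsClosed (H : Set O4))
    (hc : IsConnected (H : Set O4)) (r : M4)
    (hr : ∀ X ∈ lieSub (matS H) (matS_closed H hH) (matS_inv H), X * r = r * X)
    (A : O4) (hA : A ∈ H) : (A : M4) * r = r * (A : M4) := by
  obtain ⟨U, hU, hUX⟩ := lieSub_nhds (matS H) (matS_closed H hH) (matS_inv H)
  let Z : Subgroup O4 :=
    { carrier := {B | (B : M4) * r = r * (B : M4)}
      one_mem' := by simp
      mul_mem' := by
        intro a b ha hb
        simp only [Set.mem_ofPred_eq, Submonoid.coe_mul] at ha hb ⊢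
        rw [Matrix.mul_assoc, hb, ← Matrix.mul_assoc, ha, Matrix.mul_assoc]
      inv_mem' := by
        intro a ha
        simp only [Set.mem_ofPred_eq] at ha ⊢
        rw [o4_inv]
        calc (a : M4)ᵀ * r = (a : M4)ᵀ * (r * (a : M4)) * (a : M4)ᵀ := by
              rw [Matrix.mul_assoc, Matrix.mul_assoc, o4_right, Matrix.mul_one]
          _ = r * (a : M4)ᵀ := by
              rw [← ha, ← Matrix.mul_assoc, o4_left, Matrix.one_mul] }
  have : ConnectedSpace H := isConnected_iff_connectedSpace.1 hc
  let ZH : Subgroup H := Z.subgroupOf H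
  have hnhds : (ZH : Set H) ∈ 𝓝 (1 : H) := by
    have hcont : Continuous (fun B : H => ((B : O4) : M4)) :=
      continuous_subtype_val.comp continuous_subtype_val
    have hU' : (fun B : H => ((B : O4) : M4)) ⁻¹' U ∈ 𝓝 (1 : H) :=
      hcont.continuousAt.preimage_mem_nhds (by exact hU)
    refine mem_of_superset hU' fun B hB => ?_
    obtain ⟨X, hX, hXe⟩ := hUX _ hB ((coe_mem_matS H _).2 B.2)
    change ((B : O4) : M4) * r = r * ((B : O4) : M4)
    refine Eq.subst (motive := fun z => z * r = r * z) hXe ?_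
    exact (Commute.exp_left (show Commute X r from hr X hX)).eq
  have hopen := ZH.isOpen_of_mem_nhds hnhds
  have hclopen : IsClopen (ZH : Set H) := ⟨ZH.isClosed_of_isOpen hopen, hopen⟩
  have huniv := hclopen.eq_univ ⟨1, ZH.one_mem⟩
  have : (⟨A, hA⟩ : H) ∈ (ZH : Set H) := by rw [huniv]; trivial
  exact this

theorem main_conj (H : Subgroup O4) (hH : IsClosed (H : Set O4))
    (hc : IsConnected (H : Set O4)) (r : M4) (hr : rᵀ = -r) (hrr : r * r = -1)
    (hcl : ∀ X : M4, Xᵀ = -X →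
      (X ∈ lieSub (matS H) (matS_closed H hH) (matS_inv H) ↔ X * r = r * X)) :
    ∃ P : O4, (fun A => P * A * P⁻¹) '' (H : Set O4) = u2Set := by
  obtain ⟨P, hP, hPr⟩ := exists_conj_J4 r hr hrr
  have hP' : Pᵀ * P = 1 := mul_eq_one_comm.1 hP
  have hrP : r * Pᵀ = Pᵀ * J4 := by
    calc r * Pᵀ = Pᵀ * (P * r) * Pᵀ := by rw [← Matrix.mul_assoc, hP', Matrix.one_mul]
      _ = Pᵀ * J4 := by rw [hPr, Matrix.mul_assoc, Matrix.mul_assoc, hP, Matrix.mul_one]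
  let Q : O4 := ⟨P, (mem_orthogonalGroup_iff (Fin 4) ℝ).2 hP⟩
  refine ⟨Q, ?_⟩
  ext B
  constructor
  · rintro ⟨A, hA, rfl⟩
    have hAr := conn_comm H hH hc r
      (fun X hX => (hcl X (o4lie_is_skew H hH X hX)).1 hX) A hA
    change (P * (A : M4) * Pᵀ) * J4 = J4 * (P * (A : M4) * Pᵀ)
    calc (P * (A : M4) * Pᵀ) * J4 = P * (A : M4) * (r * Pᵀ) := by
          rw [Matrix.mul_assoc (P * (A : M4)), hrP]
      _ = P * ((A : M4) * r) * Pᵀ := by simp only [Matrix.mul_assoc]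
      _ = (P * r) * (A : M4) * Pᵀ := by rw [hAr]; simp only [Matrix.mul_assoc]
      _ = J4 * (P * (A : M4) * Pᵀ) := by rw [hPr]; simp only [Matrix.mul_assoc]
  · intro hB
    have hB' : (B : M4) * J4 = J4 * (B : M4) := hB
    let T : Submonoid M4 :=
      { carrier := {b | Pᵀ * b * P ∈ matS H}
        one_mem' := by
          simp only [Set.mem_ofPred_eq, Matrix.mul_one, hP']
          exact (matS H).one_mem
        mul_mem' := by
          intro a b ha hb
          have h := (matS H).mul_mem ha hb
          have e : Pᵀ * a * P * (Pᵀ * b * P) = Pᵀ * (a * b) * P := by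
            calc Pᵀ * a * P * (Pᵀ * b * P) = Pᵀ * a * (P * Pᵀ) * b * P := by
                  simp only [Matrix.mul_assoc]
              _ = Pᵀ * (a * b) * P := by
                  rw [hP, Matrix.mul_one]; simp only [Matrix.mul_assoc]
          rwa [e] at h }
    have hkey : ∀ X : M4, Xᵀ = -X → X * X = -1 → X * J4 = J4 * X → ∀ θ : ℝ,
        Real.cos θ • (1 : M4) + Real.sin θ • X ∈ T := by
      intro X hXs hXX hXJ θ
      rw [← lt_exp_sq_neg_one X hXX θ]
      change Pᵀ * exp (θ • X) * P ∈ matS H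
      have e2 := lt_exp_conj Pᵀ P (θ • X) hP' hP
      have e : Pᵀ * (θ • X) * P = θ • (Pᵀ * X * P) := by
        rw [Matrix.mul_smul, Matrix.smul_mul]
      rw [e] at e2
      refine Eq.subst (motive := fun z => z ∈ matS H) e2 ?_
      refine (hcl (Pᵀ * X * P) ?_).2 ?_ θ
      · rw [transpose_mul, transpose_mul, transpose_transpose, hXs]
        simp [Matrix.mul_assoc]
      · calc Pᵀ * X * P * r = Pᵀ * (X * J4) * P := by
              rw [Matrix.mul_assoc _ P, hPr]; simp only [Matrix.mul_assoc]
          _ = (Pᵀ * J4) * X * P := by rw [hXJ]; simp only [Matrix.mul_assoc]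
          _ = r * (Pᵀ * X * P) := by rw [← hrP]; simp only [Matrix.mul_assoc]
    have hBT : (B : M4) ∈ T := by
      refine u2_gen T ?_ ?_ B (o4_left B) hB'
      · intro v hv
        refine hkey _ (Lm_skew v) ?_ ?_
        · rw [Lm_sq, hv]; simp
        · rw [J4_eq_Rm, Lm_Rm]
      · refine hkey _ ?_ ?_ rfl
        · rw [J4_eq_Rm, Rm_skew]
        · rw [J4_eq_Rm, Rm_sq]; simp [dotProduct, Fin.sum_univ_three]
    have hmem : Q⁻¹ * B * Q ∈ H := (coe_mem_matS H (Q⁻¹ * B * Q)).1 hBT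
    exact ⟨Q⁻¹ * B * Q, hmem, by group⟩

theorem lie_class (H : Subgroup O4) (hH : IsClosed (H : Set O4)) (h4 : 4 ≤ orth4SubgroupDim H) :
    orth4SubgroupDim H = 6 ∨ (orth4SubgroupDim H = 4 ∧ ∃ r : M4, rᵀ = -r ∧ r * r = -1 ∧
      ∀ X : M4, Xᵀ = -X →
        (X ∈ lieSub (matS H) (matS_closed H hH) (matS_inv H) ↔ X * r = r * X)) := by
  rw [dim_eq H hH] at h4 ⊢
  have h4' : 4 ≤ Module.finrank ℝ (lieSub (matS H) (matS_closed H hH) (matS_inv H)) := by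
    exact_mod_cast h4
  rcases so4_class _ (o4lie_is_skew H hH) (fun X hX Y hY => lieSub_bracket _ _ _ X Y hX hY) h4' with
    ⟨h, _⟩ | ⟨h, h'⟩
  · left; rw [h]; norm_num
  · right; rw [h]; exact ⟨by norm_num, h'⟩

end MainPart

/-- `SO(4, ℝ)` has no closed connected proper subgroup of dimension `5`, and every closed
connected `4`-dimensional subgroup of `SO(4, ℝ)` is conjugate in `O(4, ℝ)` to `U(2)`
embedded via `ℂ² ≅ ℝ⁴`. -/
theorem stmt_15 :
    (∀ H : Subgroup ↥(Matrix.orthogonalGroup (Fin 4) ℝ),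
      (H : Set ↥(Matrix.orthogonalGroup (Fin 4) ℝ)) ⊆ so4Set →
      IsClosed (H : Set ↥(Matrix.orthogonalGroup (Fin 4) ℝ)) →
      IsConnected (H : Set ↥(Matrix.orthogonalGroup (Fin 4) ℝ)) →
      (H : Set ↥(Matrix.orthogonalGroup (Fin 4) ℝ)) ≠ so4Set →
      orth4SubgroupDim H ≠ 5) ∧
    (∀ H : Subgroup ↥(Matrix.orthogonalGroup (Fin 4) ℝ),
      (H : Set ↥(Matrix.orthogonalGroup (Fin 4) ℝ)) ⊆ so4Set →
      IsClosed (H : Set ↥(Matrix.orthogonalGroup (Fin 4) ℝ)) →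
      IsConnected (H : Set ↥(Matrix.orthogonalGroup (Fin 4) ℝ)) →
      orth4SubgroupDim H = 4 →
      ∃ P : ↥(Matrix.orthogonalGroup (Fin 4) ℝ),
        (fun A => P * A * P⁻¹) '' (H : Set ↥(Matrix.orthogonalGroup (Fin 4) ℝ)) = u2Set) := by
  refine ⟨fun H _ hH _ _ h5 => ?_, fun H _ hH hc h4 => ?_⟩
  · rcases lie_class H hH (by rw [h5]; norm_num) with h | ⟨h, _⟩ <;>
      (rw [h5] at h; norm_num at h)
  · rcases lie_class H hH (by rw [h4]) with h | ⟨_, r, hr, hrr, hcl⟩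
    · rw [h4] at h; norm_num at h
    · exact main_conj H hH hc r hr hrr hcl
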